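/- Let k be a commutative ring and G an abelian group. For a two-cocycle σ : G × G → kˣ define b_σ(g,h) = σ(h,g)·σ(g,h)⁻¹. Then: (1) b_σ is an alternating bicharacter of G, i.e., it is multiplicative in each variable and b_σ(g,g) = 1 for all g ∈ G; (2) b_{στ} = b_σ · b_τ for the pointwise (convolution) product of two two-cocycles σ, τ; (3) if τ(g,h) = λ(g)·λ(h)·σ(g,h)·λ(gh)⁻¹ for some map λ : G → kˣ (i.e., σ and τ are cohomologous), then b_τ = b_σ; (4) every alternating bicharacter b : G × G → kˣ is of the form b_σ for some two-cocycle σ. Consequently, σ ↦ b_σ induces a surjective group homomorphism from the second cohomology group H²(G, kˣ) (with trivial G-action on kˣ) onto the group Alt²(G, kˣ) of alternating bicharacters of G. -/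

import Mathlib

section

variable (G : Type*) [CommGroup G] (k : Type*) [CommRing k]

/-- A two-cocycle on a group `G` with values in `kˣ`. -/
def IsTwoCocycle (σ : G → G → kˣ) : Prop :=
  ∀ g h l, σ g h * σ (g * h) l = σ h l * σ g (h * l)

/-- An alternating bicharacter on an abelian group `G` with values in `kˣ`. -/
def IsAltBichar (b : G → G → kˣ) : Prop :=
  (∀ g g' h, b (g * g') h = b g h * b g' h) ∧
  (∀ g h h', b g (h * h') = b g h * b g h') ∧
  (∀ g, b g g = 1)

variable {G k}

/-- The antisymmetrization `b_σ(g,h) = σ(h,g)·σ(g,h)⁻¹` of a two-cocycle. -/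
def bmap (σ : G → G → kˣ) : G → G → kˣ := fun g h => σ h g * (σ g h)⁻¹

variable (G k)

/-- The group of two-cocycles of `G` with values in `kˣ` (as a subgroup of the
group of all functions `G × G → kˣ` under pointwise multiplication). -/
def cocycleGroup : Subgroup (G → G → kˣ) where
  carrier := {σ | IsTwoCocycle G k σ}
  mul_mem' := by
    intro a b ha hb g h l
    simp only [Pi.mul_apply]
    rw [mul_mul_mul_comm, ha g h l, hb g h l, mul_mul_mul_comm]
  one_mem' := by intro g h l; simp
  inv_mem' := by
    intro a ha g h l
    simp only [Pi.inv_apply, ← mul_inv]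
    rw [ha g h l]

/-- The group of two-coboundaries `∂λ(g,h) = λ(g)·λ(h)·λ(gh)⁻¹`. -/
def coboundaryGroup : Subgroup (G → G → kˣ) where
  carrier := {τ | ∃ lam : G → kˣ, ∀ g h, τ g h = lam g * lam h * (lam (g * h))⁻¹}
  mul_mem' := by
    rintro a b ⟨la, hla⟩ ⟨lb, hlb⟩
    refine ⟨la * lb, fun g h => ?_⟩
    simp only [Pi.mul_apply, hla g h, hlb g h, mul_inv]
    simp [mul_comm, mul_left_comm, mul_assoc]
  one_mem' := ⟨fun _ => 1, by simp⟩
  inv_mem' := by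
    rintro a ⟨la, hla⟩
    refine ⟨la⁻¹, fun g h => ?_⟩
    simp only [Pi.inv_apply, hla g h, mul_inv, inv_inv]

/-- The group of alternating bicharacters of `G` with values in `kˣ`. -/
def altBicharGroup : Subgroup (G → G → kˣ) where
  carrier := {b | IsAltBichar G k b}
  mul_mem' := by
    rintro a b ⟨ha1, ha2, ha3⟩ ⟨hb1, hb2, hb3⟩
    refine ⟨fun g g' h => ?_, fun g h h' => ?_, fun g => ?_⟩
    · simp only [Pi.mul_apply, ha1 g g' h, hb1 g g' h]
      simp [mul_comm, mul_left_comm, mul_assoc]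
    · simp only [Pi.mul_apply, ha2 g h h', hb2 g h h']
      simp [mul_comm, mul_left_comm, mul_assoc]
    · simp only [Pi.mul_apply, ha3 g, hb3 g, mul_one]
  one_mem' := ⟨by simp, by simp, by simp⟩
  inv_mem' := by
    rintro a ⟨ha1, ha2, ha3⟩
    refine ⟨fun g g' h => ?_, fun g h h' => ?_, fun g => ?_⟩
    · simp only [Pi.inv_apply, ha1 g g' h, mul_inv]
    · simp only [Pi.inv_apply, ha2 g h h', mul_inv]
    · simp only [Pi.inv_apply, ha3 g, inv_one]

section Helpers

/-- The twisted product used to trivialize symmetric bilinear cocycles. -/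
structure TwistedProd (P A : Type*) where
  fst : P
  snd : A

/-- Group structure on `P × A` twisted by a symmetric bilinear map. -/
abbrev twistedAddCommGroup {P A : Type*} [AddCommGroup P] [AddCommGroup A]
    (β : P →ₗ[ℤ] P →ₗ[ℤ] A) (hs : ∀ x y, β x y = β y x) : AddCommGroup (TwistedProd P A) :=
  letI : Add (TwistedProd P A) := ⟨fun x y => ⟨x.fst + y.fst, x.snd + y.snd + β x.fst y.fst⟩⟩
  letI : Neg (TwistedProd P A) := ⟨fun x => ⟨-x.fst, -x.snd + β x.fst x.fst⟩⟩
  letI : Zero (TwistedProd P A) := ⟨⟨0, 0⟩⟩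
  { AddGroup.ofLeftAxioms
      (by
        rintro ⟨p, a⟩ ⟨q, b⟩ ⟨r, c⟩
        change TwistedProd.mk _ _ = TwistedProd.mk _ _
        congr 1
        · exact add_assoc _ _ _
        · change a + b + β p q + c + β (p + q) r = a + (b + c + β q r) + β p (q + r)
          simp only [map_add, LinearMap.add_apply]
          abel)
      (by
        rintro ⟨p, a⟩
        change TwistedProd.mk _ _ = TwistedProd.mk _ _
        congr 1
        · exact zero_add _
        · change 0 + a + β 0 p = a
          simp)
      (by
        rintro ⟨p, a⟩
        change TwistedProd.mk _ _ = TwistedProd.mk _ _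
        congr 1
        · exact neg_add_cancel _
        · change -a + β p p + a + β (-p) p = 0
          simp only [map_neg, LinearMap.neg_apply]
          abel) with
    add_comm := by
      rintro ⟨p, a⟩ ⟨q, b⟩
      change TwistedProd.mk _ _ = TwistedProd.mk _ _
      congr 1
      · exact add_comm _ _
      · change a + b + β p q = b + a + β q p
        rw [hs p q]
        abel }

/-- A symmetric bilinear map on a subgroup of a projective `ℤ`-module is a coboundary. -/
theorem exists_quadratic_refinement {P F A : Type*} [AddCommGroup P] [AddCommGroup F]
    [AddCommGroup A] [Module.Projective ℤ F] (ι : P →+ F) (hι : Function.Injective ι)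
    (β : P →ₗ[ℤ] P →ₗ[ℤ] A) (hs : ∀ x y, β x y = β y x) :
    ∃ γ : P → A, ∀ x y, γ (x + y) = γ x + γ y + β x y := by
  let := twistedAddCommGroup β hs
  let D := CharacterModule A → AddCircle (1 : ℚ)
  let j : A →+ D := AddMonoidHom.mk' (fun a c => c a) (fun a b => funext fun c => map_add c a b)
  have hj : Function.Injective j := by
    rw [injective_iff_map_eq_zero]
    intro a ha
    exact CharacterModule.eq_zero_of_character_apply (fun c => congrFun ha c)
  let i : A →+ TwistedProd P A := AddMonoidHom.mk' (fun a => ⟨0, a⟩) (fun a b => by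
    change TwistedProd.mk _ _ = TwistedProd.mk _ _
    congr 1
    · exact (add_zero _).symm
    · change a + b = a + b + β 0 0
      simp)
  have hi : Function.Injective i := fun a b h => congrArg TwistedProd.snd h
  obtain ⟨φ, hφ⟩ := (Module.Baer.of_divisible D).extension_property_addMonoidHom i hi j
  have hφi : ∀ a, φ ⟨0, a⟩ = j a := fun a => DFunLike.congr_fun hφ a
  have hadd : ∀ x y, φ ⟨x, 0⟩ + φ ⟨y, 0⟩ = φ ⟨x + y, 0⟩ + j (β x y) := by
    intro x y
    rw [← hφi, ← map_add, ← map_add]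
    congr 1
    change TwistedProd.mk _ _ = TwistedProd.mk _ _
    congr 1
    · exact (add_zero _).symm
    · change 0 + 0 + β x y = 0 + β x y + β (x + y) 0
      simp
  let q := QuotientAddGroup.mk' j.range
  have hq : ∀ a, q (j a) = 0 := fun a => (QuotientAddGroup.eq_zero_iff _).mpr ⟨a, rfl⟩
  let ψ₀ : P →+ D ⧸ j.range := AddMonoidHom.mk' (fun x => q (φ ⟨x, 0⟩)) (fun x y => by
    rw [← map_add, hadd, map_add q, hq, add_zero])
  let : DivisibleBy (D ⧸ j.range) ℤ :=
    Function.Surjective.divisibleBy q (QuotientAddGroup.mk'_surjective _)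
      (fun a n => map_zsmul q n a)
  obtain ⟨ψ₁, hψ₁⟩ :=
    (Module.Baer.of_divisible (D ⧸ j.range)).extension_property_addMonoidHom ι hι ψ₀
  obtain ⟨ψ, hψ⟩ := Module.projective_lifting_property q.toIntLinearMap ψ₁.toIntLinearMap
    (QuotientAddGroup.mk'_surjective _)
  have hmem : ∀ x, ∃ a, j a = ψ (ι x) - φ ⟨x, 0⟩ := by
    intro x
    have e1 : q (ψ (ι x)) = ψ₁ (ι x) := LinearMap.congr_fun hψ (ι x)
    have e2 : ψ₁ (ι x) = q (φ ⟨x, 0⟩) := DFunLike.congr_fun hψ₁ x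
    have e3 : q (ψ (ι x) - φ ⟨x, 0⟩) = 0 := by rw [map_sub, e1, e2, sub_self]
    exact (QuotientAddGroup.eq_zero_iff _).mp e3
  choose γ hγ using hmem
  refine ⟨γ, fun x y => hj ?_⟩
  rw [map_add, map_add, hγ, hγ, hγ, map_add, map_add]
  linear_combination (norm := abel) hadd x y

/-- Every alternating bilinear map is the antisymmetrization of a cocycle. -/
theorem exists_cocycle_of_alt {M A : Type*} [AddCommGroup M] [AddCommGroup A]
    (B : M →ₗ[ℤ] M →ₗ[ℤ] A) (hB : ∀ x, B x x = 0) :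
    ∃ σ : M → M → A, (∀ g h l, σ g h + σ (g + h) l = σ h l + σ g (h + l)) ∧
      ∀ g h, σ h g - σ g h = B g h := by
  classical
  let : LinearOrder M := linearOrderOfSTO WellOrderingRel
  have hanti : ∀ x y, B x y = - B y x := by
    intro x y
    have h := hB (x + y)
    simp only [map_add, LinearMap.add_apply, hB, zero_add, add_zero] at h
    exact eq_neg_of_add_eq_zero_right h
  let π : (M →₀ ℤ) →ₗ[ℤ] M := Finsupp.linearCombination ℤ id
  let β : (M →₀ ℤ) →ₗ[ℤ] (M →₀ ℤ) →ₗ[ℤ] A :=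
    Finsupp.linearCombination ℤ (fun x =>
      Finsupp.linearCombination ℤ (fun y => if y < x then B y x else 0))
  have hβ' : β.flip - β = B.compl₁₂ π π := by
    ext x y
    simp only [β, π, LinearMap.compl₁₂_apply, LinearMap.sub_apply, LinearMap.flip_apply,
      LinearMap.comp_apply, Finsupp.lsingle_apply, Finsupp.linearCombination_single, one_smul, id]
    rcases lt_trichotomy x y with h | h | h
    · simp [h, h.not_gt]
    · subst h; simp [hB]
    · simp [h, h.not_gt, hanti x y]
  have hβ : ∀ x y, β y x - β x y = B (π x) (π y) := fun x y =>
    LinearMap.congr_fun (LinearMap.congr_fun hβ' x) y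
  have hβR : ∀ x y, π y = 0 → β y x = β x y := by
    intro x y h
    have := hβ x y
    rw [h, map_zero] at this
    exact sub_eq_zero.mp this
  let R := LinearMap.ker π
  obtain ⟨γ, hγ⟩ := exists_quadratic_refinement R.subtype.toAddMonoidHom
    R.injective_subtype (β.compl₁₂ R.subtype R.subtype)
    (fun x y => hβR y x x.2)
  let t : M → (M →₀ ℤ) := fun g => Finsupp.single g 1
  have ht : ∀ g, π (t g) = g := fun g => by simp [π, t]
  let r : M → M → R := fun g h => ⟨t g + t h - t (g + h), by
    simp only [R, LinearMap.mem_ker, map_sub, map_add, ht, sub_self]⟩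
  have hr : ∀ g h, (r g h : M →₀ ℤ) = t g + t h - t (g + h) := fun _ _ => rfl
  have hrs : ∀ g h, r g h = r h g := by
    intro g h
    apply Subtype.ext
    rw [hr, hr, add_comm g h, add_comm (t g)]
  refine ⟨fun g h => β (t g) (t h) - γ (r g h) - β (t (g + h)) (r g h), ?_, ?_⟩
  · intro g h l
    have e1 := hγ (r g h) (r (g + h) l)
    have e2 := hγ (r h l) (r g (h + l))
    have e3 : r g h + r (g + h) l = r h l + r g (h + l) := by
      apply Subtype.ext
      simp only [Submodule.coe_add, hr, add_assoc g h l]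
      abel
    rw [e3] at e1
    have e4 := e1.symm.trans e2
    simp only [LinearMap.compl₁₂_apply, Submodule.subtype_apply] at e4
    have c2 := hβR (t (g + h)) (r g h) (r g h).2
    have c3 := hβR (t g) (r h l) (r h l).2
    have c4 := hβR (t (g + (h + l))) (r h l) (r h l).2
    have c5 := hβR (t (g + (h + l))) (r g h) (r g h).2
    have c6 := hβR (t (h + l)) (r h l) (r h l).2
    simp only [hr, add_assoc g h l, map_add, map_sub, LinearMap.add_apply,
      LinearMap.sub_apply] at e4 c2 c3 c4 c5 c6 ⊢
    linear_combination (norm := abel) -e4 + c2 - c5 - c6 - c3 + c4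
  · intro g h
    beta_reduce
    rw [hrs h g, add_comm h g, sub_sub_sub_cancel_right, sub_sub_sub_cancel_right, hβ, ht, ht]

/-- Antisymmetrizations of cocycles are additive in the first variable. -/
theorem antisymm_add_left {M A : Type*} [AddCommGroup M] [AddCommGroup A] (σ : M → M → A)
    (hσ : ∀ g h l, σ g h + σ (g + h) l = σ h l + σ g (h + l)) (g g' h : M) :
    σ h (g + g') - σ (g + g') h = (σ h g - σ g h) + (σ h g' - σ g' h) := by
  have e1 := hσ h g g'
  have e2 := hσ g h g'
  have e3 := hσ g g' h
  rw [add_comm h g] at e1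
  rw [add_comm h g'] at e2
  linear_combination (norm := abel) e2 - e1 - e3

end Helpers

/-- the antisymmetrization `σ ↦ b_σ` of two-cocycles: (1) `b_σ` is an
alternating bicharacter; (2) it is multiplicative in `σ`; (3) it only depends on
the cohomology class of `σ`; (4) every alternating bicharacter arises this way.
Consequently it induces a surjective group homomorphism from
`H²(G, kˣ) = Z²(G,kˣ)/B²(G,kˣ)` onto the group `Alt²(G, kˣ)`. -/
theorem bmap_induces_surjection_H2_onto_Alt2 :
    (∀ σ : G → G → kˣ, IsTwoCocycle G k σ → IsAltBichar G k (bmap σ)) ∧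
    (∀ σ τ : G → G → kˣ, IsTwoCocycle G k σ → IsTwoCocycle G k τ →
      bmap (σ * τ) = fun g h => bmap σ g h * bmap τ g h) ∧
    (∀ (σ τ : G → G → kˣ) (lam : G → kˣ), IsTwoCocycle G k σ →
      (∀ g h, τ g h = lam g * lam h * σ g h * (lam (g * h))⁻¹) → bmap τ = bmap σ) ∧
    (∀ b : G → G → kˣ, IsAltBichar G k b →
      ∃ σ : G → G → kˣ, IsTwoCocycle G k σ ∧ bmap σ = b) ∧
    ∃ Φ : (cocycleGroup G k ⧸ (coboundaryGroup G k).subgroupOf (cocycleGroup G k)) →*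
        altBicharGroup G k,
      Function.Surjective Φ ∧
      ∀ σ : cocycleGroup G k,
        ((Φ (QuotientGroup.mk σ) : altBicharGroup G k) : G → G → kˣ) = bmap (σ : G → G → kˣ) := by
  have h1 : ∀ σ : G → G → kˣ, IsTwoCocycle G k σ → IsAltBichar G k (bmap σ) := by
    intro σ hσ
    have key : ∀ g g' h, bmap σ (g * g') h = bmap σ g h * bmap σ g' h := fun g g' h =>
      antisymm_add_left (M := Additive G) (A := Additive kˣ) σ hσ g g' h
    have hinv : ∀ g h, bmap σ g h = (bmap σ h g)⁻¹ := fun g h => by simp [bmap]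
    refine ⟨key, fun g h h' => ?_, fun g => by simp [bmap]⟩
    rw [hinv g (h * h'), key, mul_inv, ← hinv, ← hinv]
  have h2 : ∀ σ τ : G → G → kˣ, bmap (σ * τ) = bmap σ * bmap τ := by
    intro σ τ
    funext g h
    simp only [bmap, Pi.mul_apply, mul_inv]
    exact mul_mul_mul_comm _ _ _ _
  have h3 : ∀ (σ τ : G → G → kˣ) (lam : G → kˣ),
      (∀ g h, τ g h = lam g * lam h * σ g h * (lam (g * h))⁻¹) → bmap τ = bmap σ := by
    intro σ τ lam h
    funext x y
    simp only [bmap, h, mul_comm y x, mul_comm (lam y) (lam x)]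
    rw [← div_eq_mul_inv, ← div_eq_mul_inv (σ y x), mul_div_mul_right_eq_div,
      mul_div_mul_left_eq_div]
  have h4 : ∀ b : G → G → kˣ, IsAltBichar G k b →
      ∃ σ : G → G → kˣ, IsTwoCocycle G k σ ∧ bmap σ = b := by
    rintro b ⟨hb1, hb2, hb3⟩
    let B : Additive G →ₗ[ℤ] Additive G →ₗ[ℤ] Additive kˣ :=
      (AddMonoidHom.mk' (fun g : Additive G =>
        (AddMonoidHom.mk' (fun h : Additive G => Additive.ofMul (b g.toMul h.toMul))
          (fun h h' => hb2 g.toMul h.toMul h'.toMul)).toIntLinearMap)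
        (fun g g' => LinearMap.ext fun h => hb1 g.toMul g'.toMul h.toMul)).toIntLinearMap
    obtain ⟨σ, hσ, hσb⟩ := exists_cocycle_of_alt B (fun x => hb3 x.toMul)
    refine ⟨fun g h => (σ (Additive.ofMul g) (Additive.ofMul h)).toMul, hσ, ?_⟩
    funext g h
    refine Eq.trans ?_ (hσb (Additive.ofMul g) (Additive.ofMul h))
    exact (div_eq_mul_inv _ _).symm
  refine ⟨h1, fun σ τ _ _ => h2 σ τ, fun σ τ lam _ => h3 σ τ lam, h4, ?_⟩
  let φ : cocycleGroup G k →* altBicharGroup G k :=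
    MonoidHom.mk' (fun σ => ⟨bmap σ.1, h1 σ.1 σ.2⟩) (fun σ τ => Subtype.ext (h2 σ.1 τ.1))
  refine ⟨QuotientGroup.lift _ φ ?_, ?_, fun σ => rfl⟩
  · rintro σ ⟨lam, hlam⟩
    apply Subtype.ext
    change bmap σ.1 = 1
    rw [h3 1 σ.1 lam (fun g h => by simpa using hlam g h)]
    funext g h
    simp [bmap]
  · rintro ⟨b, hb⟩
    obtain ⟨σ, hσ, hσb⟩ := h4 b hb
    exact ⟨QuotientGroup.mk ⟨σ, hσ⟩, Subtype.ext hσb⟩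


end
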